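/- arXiv:2409.01430 — 9 statements merged into one kernel-verified Lean document; each statement's English description precedes it below -/
import Mathlib

section
/- For every infinite set E there exists an ℵ₀-independent family {A_i : i ∈ I} of subsets of E with card(I) = 2^{card E}. -/
/-- A family `S` of subsets of `E` is ℵ₀-independent: for every finite
subfamily, split into a part `T₀` taken as is and a disjoint part `T₁` taken
complemented (this encodes a finite index set `J` and `f : J → {0,1}`), the
corresponding intersection is nonempty. -/
def Aleph0Independent (E : Type) (S : Set (Set E)) : Prop :=
  ∀ T₀ T₁ : Set (Set E), T₀ ⊆ S → T₁ ⊆ S → T₀.Finite → T₁.Finite →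
    Disjoint T₀ T₁ → ((⋂ A ∈ T₀, A) ∩ ⋂ A ∈ T₁, Aᶜ).Nonempty

theorem exists_aleph0_independent_family (E : Type) [Infinite E] :
    ∃ S : Set (Set E), Cardinal.mk ↥S = 2 ^ Cardinal.mk E ∧
      Aleph0Independent E S := by
  classical
  have hcard : Cardinal.mk E = Cardinal.mk (Finset E × Finset (Finset E)) := by
    rw [Cardinal.mk_prod, Cardinal.mk_finset_of_infinite (Finset E),
      Cardinal.mk_finset_of_infinite E]
    simp [Cardinal.mul_eq_self (Cardinal.aleph0_le_mk E)]
  obtain ⟨f⟩ := Cardinal.eq.1 hcard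
  let A : Set E → Set E := fun B => {e | (f e).1.filter (· ∈ B) ∈ (f e).2}
  have hmem : ∀ (B : Set E) (F : Finset E) (G : Finset (Finset E)),
      f.symm (F, G) ∈ A B ↔ F.filter (· ∈ B) ∈ G := by
    intro B F G
    simp [A]
  have hd : ∀ B C : Set E, ∃ x : E, B ≠ C → ¬ (x ∈ B ↔ x ∈ C) := by
    intro B C
    by_contra! h
    have h1 := h (Classical.arbitrary E)
    exact h1.1 (Set.ext fun x => (h x).2)
  choose d hd using hd
  have hinj : Function.Injective A := by
    intro B C h
    by_contra hne
    have h1 := hd B C hne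
    have h2 := hmem B {d B C} {({d B C} : Finset E).filter (· ∈ B)}
    have h3 := hmem C {d B C} {({d B C} : Finset E).filter (· ∈ B)}
    rw [← h, h2] at h3
    have h4 := Finset.mem_singleton.1 (h3.1 (Finset.mem_singleton_self _))
    have h5 := Finset.ext_iff.1 h4 (d B C)
    simp only [Finset.mem_filter, Finset.mem_singleton, true_and] at h5
    exact h1 h5.symm
  refine ⟨Set.range A, ?_, ?_⟩
  · rw [Cardinal.mk_range_eq A hinj, Cardinal.mk_set]
  · intro T₀ T₁ h₀ h₁ hf₀ hf₁ hdisj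
    have g₀ : (A ⁻¹' T₀).Finite := hf₀.preimage hinj.injOn
    have g₁ : (A ⁻¹' T₁).Finite := hf₁.preimage hinj.injOn
    let F : Finset E := (g₀.toFinset ×ˢ g₁.toFinset).image fun p => d p.1 p.2
    let G : Finset (Finset E) := g₀.toFinset.image fun B => F.filter (· ∈ B)
    refine ⟨f.symm (F, G), ?_, ?_⟩
    · refine Set.mem_iInter₂.2 fun X hX => ?_
      obtain ⟨B, rfl⟩ := h₀ hX
      rw [hmem]
      exact Finset.mem_image.2 ⟨B, g₀.mem_toFinset.2 hX, rfl⟩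
    · refine Set.mem_iInter₂.2 fun X hX => ?_
      obtain ⟨C, rfl⟩ := h₁ hX
      rw [Set.mem_compl_iff, hmem]
      intro hG
      obtain ⟨B, hB, hBC⟩ := Finset.mem_image.1 hG
      have hB' : A B ∈ T₀ := g₀.mem_toFinset.1 hB
      have hne : B ≠ C := by
        rintro rfl
        exact Set.disjoint_left.1 hdisj hB' hX
      have hF : d B C ∈ F :=
        Finset.mem_image.2 ⟨(B, C), Finset.mem_product.2 ⟨hB, g₁.mem_toFinset.2 hX⟩, rfl⟩
      have h5 := Finset.ext_iff.1 hBC (d B C)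
      simp only [Finset.mem_filter, hF, true_and] at h5
      exact hd B C hne h5
end

section
/- For every set E with card(E) = ℵ₁ there exists an Ulam (ℵ₀, ℵ₁)-matrix over E. -/
/-- For every set `E` of cardinality `ℵ₁` there is an Ulam `(ℵ₀, ℵ₁)`-matrix
`(E_{ξ,ζ})_{ξ<ℵ₀, ζ<ℵ₁}` over `E`: the rows `ξ` are indexed by `ℕ` and the
columns `ζ` by the ordinals below `ω₁`. -/
theorem exists_ulam_matrix (E : Type) (hE : Cardinal.mk E = Cardinal.aleph 1) :
    ∃ F : ℕ → {o : Ordinal // o < (Cardinal.aleph 1).ord} → Set E,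
      (∀ ζ, Cardinal.mk ↥(Set.univ \ ⋃ ξ : ℕ, F ξ ζ) ≤ Cardinal.aleph0) ∧
      (∀ (ξ : ℕ) ζ ζ', ζ ≠ ζ' → F ξ ζ ∩ F ξ ζ' = ∅) := by
  have hI := Cardinal.mk_Iio_ordinal (Cardinal.aleph 1).ord
  rw [Cardinal.card_ord] at hI
  obtain ⟨e⟩ : Nonempty (E ≃ Set.Iio (Cardinal.aleph 1).ord) := by
    rw [← Cardinal.lift_mk_eq', hI, hE]
    simp
  have hc : ∀ o : Ordinal, o < (Cardinal.aleph 1).ord → (Set.Iio o).Countable := by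
    intro o ho
    rw [Cardinal.countable_iff_lt_aleph_one, Cardinal.mk_Iio_ordinal]
    rw [Cardinal.lt_ord] at ho
    rw [← Cardinal.lift_lt_aleph_one] at ho
    exact ho
  have hf : ∀ x : E, ∃ f : Ordinal → ℕ, Set.InjOn f (Set.Iio (e x).1) := fun x =>
    Set.countable_iff_exists_injOn.1 (hc _ (e x).2)
  choose f hf using hf
  refine ⟨fun n ζ => {x | ζ.1 < (e x).1 ∧ f x ζ.1 = n}, fun ζ => ?_, fun n ζ ζ' hne => ?_⟩
  · rw [Cardinal.le_aleph0_iff_set_countable]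
    have h1 : (Set.Iic ζ.1).Countable := by
      rw [← Set.Iio_insert]
      exact (hc _ ζ.2).insert _
    refine (h1.preimage (f := fun x => (e x).1)
      (Subtype.val_injective.comp e.injective)).mono ?_
    intro x hx
    by_contra h
    refine hx.2 (Set.mem_iUnion.2 ⟨f x ζ.1, ?_, rfl⟩)
    simpa using h
  · ext x
    simp only [Set.mem_inter_iff, Set.mem_setOf_eq, Set.mem_empty_iff_false, iff_false]
    rintro ⟨⟨h1, h2⟩, h3, h4⟩
    exact hne (Subtype.ext (hf x h1 h3 (h2.trans h4.symm)))
end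

section
/- Let X be a set and let I be a σ-ideal of subsets of X containing all countable subsets of X. Let (O_α)_{α<ω₁} be a family of pairwise disjoint countable subsets of X such that ⋃_{α<ω₁} O_α ∉ I, and let (Π_{ξ,ζ})_{ξ<ℵ₀, ζ<ℵ₁} be an Ulam (ℵ₀, ℵ₁)-matrix over ω₁. Then there exist ξ₀ < ℵ₀ and a set Θ ⊆ ω₁ with card(Θ) = ℵ₁ such that for every ζ ∈ Θ the set ⋃_{γ ∈ Π_{ξ₀,ζ}} O_γ does not belong to I; moreover, for any two distinct ζ, ζ' ∈ Θ the sets ⋃_{γ ∈ Π_{ξ₀,ζ}} O_γ and ⋃_{γ ∈ Π_{ξ₀,ζ'}} O_γ are disjoint. -/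
/-- Ordinals below `ω₁`, i.e. the countable ordinals. -/
abbrev Omega1 : Type 1 := {o : Ordinal // o < (Cardinal.aleph 1).ord}

theorem ulam_pigeonhole
    (X : Type) (I : Set (Set X))
    -- `I` is a σ-ideal containing all countable sets:
    (hdown : ∀ s t : Set X, s ⊆ t → t ∈ I → s ∈ I)
    (hunion : ∀ f : ℕ → Set X, (∀ n, f n ∈ I) → (⋃ n, f n) ∈ I)
    (hcount : ∀ s : Set X, s.Countable → s ∈ I)
    -- `(O_α)_{α<ω₁}` pairwise disjoint countable sets with abundant union:
    (O : Omega1 → Set X)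
    (hOcnt : ∀ α, (O α).Countable)
    (hOdisj : ∀ α β : Omega1, α ≠ β → Disjoint (O α) (O β))
    (hObig : (⋃ α, O α) ∉ I)
    -- `(P_{ξ,ζ})` an Ulam (ℵ₀, ℵ₁)-matrix over `ω₁`:
    (P : ℕ → Omega1 → Set Omega1)
    (hP1 : ∀ ζ, Cardinal.mk ↥(Set.univ \ ⋃ ξ : ℕ, P ξ ζ) ≤ Cardinal.aleph0)
    (hP2 : ∀ (ξ : ℕ) (ζ ζ' : Omega1), ζ ≠ ζ' → P ξ ζ ∩ P ξ ζ' = ∅) :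
    ∃ ξ₀ : ℕ, ∃ Θ : Set Omega1, Cardinal.mk ↥Θ = Cardinal.aleph 1 ∧
      (∀ ζ ∈ Θ, (⋃ γ ∈ P ξ₀ ζ, O γ) ∉ I) ∧
      (∀ ζ ∈ Θ, ∀ ζ' ∈ Θ, ζ ≠ ζ' →
        (⋃ γ ∈ P ξ₀ ζ, O γ) ∩ (⋃ γ ∈ P ξ₀ ζ', O γ) = ∅) := by
  classical
  have hmk : Cardinal.mk Omega1 = Cardinal.aleph 1 := by
    have h := Cardinal.mk_Iio_ordinal (Cardinal.aleph.{0} 1).ord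
    rw [Cardinal.card_ord, Cardinal.lift_aleph, Ordinal.lift_one] at h
    exact h
  have key : ∀ ζ, ∃ ξ : ℕ, (⋃ γ ∈ P ξ ζ, O γ) ∉ I := by
    intro ζ
    by_contra hcon
    push Not at hcon
    apply hObig
    have hC : (Set.univ \ ⋃ ξ : ℕ, P ξ ζ).Countable := Cardinal.mk_le_aleph0_iff.1 (hP1 ζ)
    have hC' : (⋃ γ ∈ (Set.univ \ ⋃ ξ : ℕ, P ξ ζ), O γ).Countable :=
      hC.biUnion fun γ _ => hOcnt γ
    refine hdown _ _ ?_ (hunion (fun n => Nat.casesOn n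
      (⋃ γ ∈ (Set.univ \ ⋃ ξ : ℕ, P ξ ζ), O γ) (fun k => ⋃ γ ∈ P k ζ, O γ)) ?_)
    · intro x hx
      obtain ⟨γ, hγ⟩ := Set.mem_iUnion.1 hx
      by_cases h : γ ∈ ⋃ ξ : ℕ, P ξ ζ
      · obtain ⟨k, hk⟩ := Set.mem_iUnion.1 h
        exact Set.mem_iUnion.2 ⟨k + 1, Set.mem_biUnion hk hγ⟩
      · exact Set.mem_iUnion.2 ⟨0, Set.mem_biUnion (⟨trivial, h⟩ :
          γ ∈ Set.univ \ ⋃ ξ : ℕ, P ξ ζ) hγ⟩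
    · intro n
      cases n with
      | zero => exact hcount _ hC'
      | succ k => exact hcon k
  choose f hf using key
  have hfib : ∃ n, ¬ (f ⁻¹' {n}).Countable := by
    by_contra hcon
    push Not at hcon
    have h1 : (⋃ n, f ⁻¹' {n}).Countable := Set.countable_iUnion hcon
    have h2 : (⋃ n, f ⁻¹' {n}) = Set.univ := by ext x; simp
    rw [h2, Set.countable_univ_iff, ← Cardinal.mk_le_aleph0_iff, hmk] at h1
    exact absurd h1 (not_le.2 Cardinal.aleph0_lt_aleph_one)
  obtain ⟨n, hn⟩ := hfib
  refine ⟨n, f ⁻¹' {n}, le_antisymm ?_ ?_, ?_, ?_⟩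
  · exact (Cardinal.mk_set_le _).trans_eq hmk
  · rw [← Cardinal.succ_aleph0]
    exact Order.succ_le_of_lt (not_le.1 fun h => hn (Cardinal.mk_le_aleph0_iff.1 h))
  · intro ζ hζ
    have h : f ζ = n := hζ
    exact h ▸ hf ζ
  · intro ζ _ ζ' _ hne
    ext x
    simp only [Set.mem_inter_iff, Set.mem_iUnion, Set.mem_empty_iff_false, iff_false]
    rintro ⟨⟨γ, hγ, hx⟩, ⟨δ, hδ, hx'⟩⟩
    by_cases h : γ = δ
    · subst h
      have : γ ∈ P n ζ ∩ P n ζ' := ⟨hγ, hδ⟩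
      rw [hP2 n ζ ζ' hne] at this
      exact this
    · exact Set.disjoint_left.1 (hOdisj γ δ h) hx hx'
end

section
/- Assume the continuum hypothesis (2^ℵ₀ = ℵ₁). Then there exists a family {A_i : i ∈ I} of subsets of ℝ with card(I) = 2^{ℵ₁} such that: (1) each A_i is a Luzin set and does not have the Baire property; (2) for every i ∈ I and every x ∈ ℝ, the translate A_i + x is a Luzin set; and (3) for every J ⊆ I with card(J) ≤ ℵ₀ and every function f : J → {0,1}, the complement in ℝ of ⋂_{j∈J} A_j^{f(j)} contains no nonmeager set having the Baire property; in particular ⋂_{j∈J} A_j^{f(j)} meets every nonmeager subset of ℝ having the Baire property. -/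
/-- `B` has the Baire property: `B = U △ M` for some open `U` and meager `M`. -/
def HasBaireProp (B : Set ℝ) : Prop :=
  ∃ U M : Set ℝ, IsOpen U ∧ IsMeagre M ∧ B = symmDiff U M

/-- `A` is a Luzin set: uncountable with countable intersection with every meager set. -/
def IsLuzin (A : Set ℝ) : Prop :=
  ¬A.Countable ∧ ∀ M : Set ℝ, IsMeagre M → (A ∩ M).Countable

open Cardinal in
theorem aux_order (W : Type) (h : #W ≤ Cardinal.aleph 1) :
    ∃ _ : LinearOrder W, WellFoundedLT W ∧ ∀ w : W, (Set.Iio w).Countable := by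
  obtain ⟨o, wf, hr⟩ := exists_ord_eq_type_lt W
  refine ⟨o, wf, fun w => ?_⟩
  have := (mk_Iio_lt w hr).trans_le h
  rw [lt_aleph_one_iff] at this
  exact Cardinal.le_aleph0_iff_set_countable.1 this

/-- Codes for an independent family. -/
abbrev Code : Type := (ℕ → ℝ) × (ℕ → Set ℕ) × Set ℕ

/-- The independent family on codes. -/
def codeSet (Y : Set ℝ) : Set Code := {s | ∃ n ∈ s.2.2, s.2.1 n = {k | s.1 k ∈ Y}}

theorem codeSet_indep (J : Set (Set ℝ)) (hJ : J.Countable) (f : J → Bool) :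
    ∃ s : Code, ∀ j : J, s ∈ codeSet j.1 ↔ f j = false := by
  classical
  have := hJ.to_subtype
  obtain ⟨c, hc⟩ := exists_injective_nat J
  have hd : ∀ p : J × J, ∃ y : ℝ, p.1 ≠ p.2 → ¬ (y ∈ p.1.1 ↔ y ∈ p.2.1) := by
    intro p
    by_cases hp : p.1 = p.2
    · exact ⟨0, fun h => (h hp).elim⟩
    · by_contra hcon
      push Not at hcon
      exact hp (Subtype.ext (Set.ext fun y => (hcon y).2))
  choose d hd using hd
  have hpair : Function.Injective (fun p : J × J => Nat.pair (c p.1) (c p.2)) := by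
    rintro ⟨a, b⟩ ⟨a', b'⟩ h
    have := Nat.pair_eq_pair.1 h
    exact Prod.ext (hc this.1) (hc this.2)
  let e : ℕ → ℝ := Function.extend (fun p : J × J => Nat.pair (c p.1) (c p.2)) d 0
  let g : ℕ → Set ℕ := Function.extend c (fun j : J => {k | e k ∈ j.1}) (fun _ => ∅)
  refine ⟨(e, g, {n | ∃ j, c j = n ∧ f j = false}), fun j => ?_⟩
  have hg : ∀ j, g (c j) = {k | e k ∈ j.1} := fun j => hc.extend_apply _ _ _
  have he : ∀ p : J × J, e (Nat.pair (c p.1) (c p.2)) = d p := fun p => hpair.extend_apply _ _ p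
  constructor
  · rintro ⟨n, ⟨j', rfl, hj'⟩, h⟩
    simp only [hg] at h
    by_cases hjj : j' = j
    · rwa [← hjj]
    · have h1 := hd (j', j) hjj
      have h2 := Set.ext_iff.1 h (Nat.pair (c j') (c j))
      simp only [Set.mem_ofPred_eq] at h2
      rw [he (j', j)] at h2
      exact (h1 h2).elim
  · intro h
    exact ⟨c j, ⟨j, rfl, h⟩, hg j⟩

/-- Indices for the transfinite construction. -/
abbrev Idx : Type := {B : Set ℝ // MeasurableSet B ∧ ¬ IsMeagre B} × Code

open Cardinal in
theorem mk_Idx : #Idx ≤ 𝔠 := by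
  have h1 : #{B : Set ℝ // MeasurableSet B ∧ ¬ IsMeagre B} ≤ 𝔠 := by
    have h2 : #{B : Set ℝ | MeasurableSet B} ≤ 𝔠 := by
      obtain ⟨b, hb, hb'⟩ := MeasurableSpace.CountablyGenerated.isCountablyGenerated (α := ℝ)
      rw [hb']
      apply MeasurableSpace.cardinal_measurableSet_le_continuum
      exact (Cardinal.le_aleph0_iff_set_countable.2 hb).trans aleph0_le_continuum
    refine le_trans ?_ h2
    exact Cardinal.mk_subtype_mono fun B hB => hB.1
  have h3 : #Code ≤ 𝔠 := by
    simp [Code, Cardinal.mk_prod, Cardinal.mk_real, Cardinal.mk_pi]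
  rw [Cardinal.mk_prod, lift_id, lift_id]
  exact (mul_le_mul' h1 h3).trans (by simp)

theorem meagre_countable {s : Set ℝ} (hs : s.Countable) : IsMeagre s := by
  have := isMeagre_biUnion hs (f := fun x : ℝ => {x}) (fun x _ => IsNowhereDense.isMeagre (by
    simp [IsNowhereDense]))
  simpa using this

theorem exists_seq {W : Type} (h : Cardinal.mk W ≤ Cardinal.aleph 1) (b : W → Set ℝ)
    (hb : ∀ w, ¬ IsMeagre (b w)) (hb' : ∀ t, IsGδ t → Dense t → ∃ w, b w = t) :
    ∃ x : W → ℝ, Function.Injective x ∧ (∀ w, x w ∈ b w) ∧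
      ∀ M : Set ℝ, IsMeagre M → {w | x w ∈ M}.Countable := by
  classical
  obtain ⟨o, wf, hcount⟩ := aux_order W h
  let N : W → Set ℝ := fun v => {y | IsMeagre ((b v)ᶜ) ∧ y ∉ b v}
  have hN : ∀ v, IsMeagre (N v) := by
    intro v
    by_cases hv : IsMeagre ((b v)ᶜ)
    · exact hv.mono fun y hy => hy.2
    · have : N v = ∅ := by ext y; simp [N, hv]
      rw [this]; exact IsMeagre.empty
  have step : ∀ (w : W) (ih : ∀ v, v < w → ℝ),
      ∃ y, y ∈ b w ∧ ∀ v (hv : v < w), y ≠ ih v hv ∧ y ∉ N v := by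
    intro w ih
    by_contra hcon
    push Not at hcon
    have := (hcount w).to_subtype
    have hm : IsMeagre (⋃ v : Set.Iio w, ({ih v.1 v.2} ∪ N v.1)) :=
      isMeagre_iUnion fun v => (meagre_countable (Set.countable_singleton _)).union (hN _)
    refine hb w (hm.mono fun y hy => ?_)
    obtain ⟨v, hv, hv'⟩ := hcon y hy
    refine Set.mem_iUnion.2 ⟨⟨v, hv⟩, ?_⟩
    by_cases hyv : y = ih v hv
    · exact Or.inl hyv
    · exact Or.inr (hv' hyv)
  choose F hF using step
  let x : W → ℝ := wf.wf.fix F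
  have hx : ∀ w, x w = F w (fun v _ => x v) := fun w => wf.wf.fix_eq F w
  have h1 : ∀ w, x w ∈ b w := fun w => by rw [hx]; exact (hF w _).1
  have h2 : ∀ v w, v < w → x w ≠ x v ∧ x w ∉ N v := fun v w hvw => by
    rw [hx w]; exact (hF w (fun v _ => x v)).2 v hvw
  refine ⟨x, ?_, h1, ?_⟩
  · intro v w hvw
    rcases lt_trichotomy v w with hlt | heq | hlt
    · exact ((h2 v w hlt).1 hvw.symm).elim
    · exact heq
    · exact ((h2 w v hlt).1 hvw).elim
  · intro M hM
    obtain ⟨t, ht, hG, hD⟩ := mem_residual.1 hM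
    obtain ⟨v, rfl⟩ := hb' t hG hD
    refine ((hcount v).union (Set.countable_singleton v)).mono fun w hw => ?_
    rcases lt_trichotomy w v with hlt | heq | hlt
    · exact Or.inl hlt
    · exact Or.inr heq
    · refine ((h2 v w hlt).2 ⟨?_, fun hwt => ht hwt hw⟩).elim
      change ((b v)ᶜ)ᶜ ∈ residual ℝ
      rw [compl_compl]
      exact mem_residual.2 ⟨b v, subset_rfl, hG, hD⟩

theorem exists_measurable_sub {B : Set ℝ} (hB : HasBaireProp B) (hB' : ¬ IsMeagre B) :
    ∃ C ⊆ B, MeasurableSet C ∧ ¬ IsMeagre C := by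
  obtain ⟨U, M, hU, hM, rfl⟩ := hB
  obtain ⟨t, ht, hG, hD⟩ := mem_residual.1 hM
  refine ⟨U ∩ t, fun y hy => Or.inl ⟨hy.1, ht hy.2⟩, hU.measurableSet.inter hG.measurableSet,
    fun hm => hB' ?_⟩
  have : IsMeagre (tᶜ) := by
    change (tᶜ)ᶜ ∈ residual ℝ
    rw [compl_compl]
    exact mem_residual.2 ⟨t, subset_rfl, hG, hD⟩
  refine IsMeagre.mono (s := (U ∩ t) ∪ tᶜ) ?_ (hm.union this)
  rintro y (hy | hy)
  · by_cases hyt : y ∈ t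
    · exact Or.inl ⟨hy.1, hyt⟩
    · exact Or.inr hyt
  · exact Or.inr fun hyt => ht hyt hy.1

theorem luzin_translate {A : Set ℝ} (hA : IsLuzin A) (x : ℝ) :
    IsLuzin ((fun a => a + x) '' A) := by
  refine ⟨fun h => hA.1 ?_, fun M hM => ?_⟩
  · exact Set.countable_of_injective_of_countable_image (add_left_injective x).injOn h
  · have h1 : IsMeagre ((fun a => a + x) ⁻¹' M) :=
      hM.preimage_of_isOpenMap (by fun_prop) (isOpenMap_add_right x)
    refine ((hA.2 _ h1).image (fun a => a + x)).mono ?_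
    rintro _ ⟨⟨a, ha, rfl⟩, hm⟩
    exact ⟨a, ⟨ha, hm⟩, rfl⟩

theorem luzin_strictly_independent_family
    (CH : (2 : Cardinal) ^ Cardinal.aleph0 = Cardinal.aleph 1) :
    ∃ (I : Type) (A : I → Set ℝ), Function.Injective A ∧
      Cardinal.mk I = 2 ^ Cardinal.aleph 1 ∧
      (∀ i : I, IsLuzin (A i) ∧ ¬HasBaireProp (A i)) ∧
      (∀ i : I, ∀ x : ℝ, IsLuzin ((fun a => a + x) '' A i)) ∧
      (∀ J : Set I, Cardinal.mk ↥J ≤ Cardinal.aleph0 → ∀ f : J → Bool,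
        (∀ B : Set ℝ, B ⊆ (⋂ j : J, cond (f j) ((A j.1)ᶜ) (A j.1))ᶜ →
          HasBaireProp B → IsMeagre B) ∧
        (∀ B : Set ℝ, HasBaireProp B → ¬IsMeagre B →
          ((⋂ j : J, cond (f j) ((A j.1)ᶜ) (A j.1)) ∩ B).Nonempty)) := by
  classical
  have CH' : (2 : Cardinal.{0}) ^ Cardinal.aleph0.{0} = Cardinal.aleph 1 := by
    rw [Cardinal.two_power_aleph0] at CH ⊢
    apply Cardinal.lift_injective
    rw [Cardinal.lift_continuum, CH]
    simp
  obtain ⟨x, hinj, hmem, hctb⟩ := exists_seq (W := Idx) (by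
    rw [← CH', Cardinal.two_power_aleph0]; exact mk_Idx) (fun w => w.1.1) (fun w => w.1.2.2)
    (fun t hG hD =>
      ⟨(⟨t, hG.measurableSet, not_isMeagre_of_isGδ_of_dense hG hD⟩, (0, fun _ => ∅, ∅)), rfl⟩)
  let A : Set ℝ → Set ℝ := fun Y => x '' {w | w.2 ∈ codeSet Y}
  have key : ∀ J : Set (Set ℝ), J.Countable → ∀ f : J → Bool, ∀ B : Set ℝ,
      HasBaireProp B → ¬IsMeagre B → ∃ y ∈ B, ∀ j : J, y ∈ A j.1 ↔ f j = false := by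
    intro J hJ f B hB hB'
    obtain ⟨C, hCB, hC, hC'⟩ := exists_measurable_sub hB hB'
    obtain ⟨s, hs⟩ := codeSet_indep J hJ f
    refine ⟨x (⟨C, hC, hC'⟩, s), hCB (hmem (⟨C, hC, hC'⟩, s)), fun j => ?_⟩
    rw [← hs j]
    exact hinj.mem_set_image
  have key1 : ∀ (Y : Set ℝ) (b : Bool) (B : Set ℝ), HasBaireProp B → ¬IsMeagre B →
      ∃ y ∈ B, (y ∈ A Y ↔ b = false) := by
    intro Y b B hB hB'
    obtain ⟨y, hy, h⟩ := key {Y} (Set.countable_singleton Y) (fun _ => b) B hB hB'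
    exact ⟨y, hy, h ⟨Y, rfl⟩⟩
  have huniv : HasBaireProp Set.univ := ⟨Set.univ, ∅, isOpen_univ, IsMeagre.empty, by ext y; simp [Set.mem_symmDiff]⟩
  have huniv' : ¬ IsMeagre (Set.univ : Set ℝ) :=
    not_isMeagre_of_isOpen isOpen_univ Set.univ_nonempty
  have hnm : ∀ Y, ¬ IsMeagre (A Y) := by
    intro Y hm
    have hb : HasBaireProp ((A Y)ᶜ) :=
      ⟨Set.univ, A Y, isOpen_univ, hm, by ext y; simp [Set.mem_symmDiff]⟩
    have hb' : ¬ IsMeagre ((A Y)ᶜ) := fun h => huniv' (by simpa using hm.union h)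
    obtain ⟨y, hy, h⟩ := key1 Y false _ hb hb'
    exact hy (h.2 rfl)
  have hL : ∀ Y, IsLuzin (A Y) := by
    intro Y
    refine ⟨fun hc => hnm Y (meagre_countable hc), fun M hM => ?_⟩
    refine ((hctb M hM).image x).mono ?_
    rintro _ ⟨⟨w, hw, rfl⟩, hm⟩
    exact ⟨w, hm, rfl⟩
  have key2 : ∀ J : Set (Set ℝ), Cardinal.mk ↥J ≤ Cardinal.aleph0 → ∀ f : J → Bool,
      ∀ B : Set ℝ, HasBaireProp B → ¬IsMeagre B →
          ((⋂ j : J, cond (f j) ((A j.1)ᶜ) (A j.1)) ∩ B).Nonempty := by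
    intro J hJ f B hB hB'
    obtain ⟨y, hy, h⟩ := key J (Cardinal.le_aleph0_iff_set_countable.1 hJ) f B hB hB'
    refine ⟨y, Set.mem_iInter.2 fun j => ?_, hy⟩
    have := h j
    cases hf : f j
    · simpa [hf] using this
    · simpa [hf] using this
  refine ⟨Set ℝ, A, ?_, ?_, fun Y => ⟨hL Y, fun hb => ?_⟩, fun Y z => luzin_translate (hL Y) z,
    fun J hJ f => ⟨fun B hsub hB => ?_, key2 J hJ f⟩⟩
  · intro Y Z hYZ
    by_contra hne
    obtain ⟨y, -, h⟩ := key {Y, Z} (Set.toFinite _).countable (fun j => decide (j.1 = Z)) _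
      huniv huniv'
    have hY := h ⟨Y, by simp⟩
    have hZ := h ⟨Z, by simp⟩
    simp [hYZ, hne] at hY hZ
    exact hZ hY
  · rw [Cardinal.mk_set, Cardinal.mk_real, ← Cardinal.two_power_aleph0, CH']
  · obtain ⟨y, hy, h⟩ := key1 Y true _ hb (hnm Y)
    simpa using h.1 hy
  · by_contra hB'
    obtain ⟨y, hy, hyB⟩ := key2 J hJ f B hB hB'
    exact hsub hyB hy
end

section
/- Assume the continuum hypothesis (2^ℵ₀ = ℵ₁). Then there exists a family {A_i : i ∈ I} of subsets of ℝ with card(I) = 2^{ℵ₁} such that: (1) each A_i is a Sierpiński set and is not Lebesgue measurable; (2) for every i ∈ I and every x ∈ ℝ, the translate A_i + x is a Sierpiński set; and (3) for every J ⊆ I with card(J) ≤ ℵ₀ and every function f : J → {0,1}, the complement in ℝ of ⋂_{j∈J} A_j^{f(j)} contains no Lebesgue measurable set of positive measure; in particular ⋂_{j∈J} A_j^{f(j)} meets every Lebesgue measurable subset of ℝ of positive measure. -/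
open MeasureTheory

/-- `A` is a Sierpiński set: uncountable with countable intersection with every
Lebesgue-null set. -/
def IsSierpinski (A : Set ℝ) : Prop :=
  ¬A.Countable ∧ ∀ N : Set ℝ, volume N = 0 → (A ∩ N).Countable

/-- Transfinite choice of points avoiding earlier points. -/
theorem exists_choice_seq {ι : Type} [LinearOrder ι] [WellFoundedLT ι]
    (hc : ∀ a : ι, (Set.Iic a).Countable) (B N : ι → Set ℝ)
    (hB : ∀ a, 0 < volume (B a)) (hN : ∀ a, volume (N a) = 0) :
    ∃ x : ι → ℝ, ∀ a, x a ∈ B a ∧ (∀ b ≤ a, x a ∉ N b) ∧ ∀ b < a, x a ≠ x b := by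
  have key : ∀ (a : ι) (g : ∀ b, b < a → ℝ),
      ∃ y, y ∈ B a ∧ (∀ b ≤ a, y ∉ N b) ∧ ∀ b (h : b < a), y ≠ g b h := by
    intro a g
    have h1 : volume (⋃ b ∈ Set.Iic a, N b) = 0 :=
      (measure_biUnion_null_iff (hc a)).2 fun b _ => hN b
    have hcnt : (Set.range fun b : Set.Iio a => g b.1 b.2).Countable := by
      have : Countable (Set.Iio a) :=
        ((hc a).mono Set.Iio_subset_Iic_self).to_subtype
      exact Set.countable_range _
    have h2 : volume (Set.range fun b : Set.Iio a => g b.1 b.2) = 0 := hcnt.measure_zero _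
    have h3 := measure_union_null h1 h2
    have h4 : ¬ B a ⊆ (⋃ b ∈ Set.Iic a, N b) ∪ Set.range fun b : Set.Iio a => g b.1 b.2 := by
      intro h
      exact (hB a).ne' (measure_mono_null h h3)
    obtain ⟨y, hy, hy'⟩ := Set.not_subset.1 h4
    refine ⟨y, hy, fun b hb hyb => hy' (Or.inl ?_), fun b hb e => hy' (Or.inr ⟨⟨b, hb⟩, e.symm⟩)⟩
    exact Set.mem_biUnion hb hyb
  choose F hF using key
  let x : ι → ℝ := (wellFounded_lt (α := ι)).fix F
  have hx : ∀ a, x a = F a fun b _ => x b := fun a => WellFounded.fix_eq _ _ _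
  refine ⟨x, fun a => ?_⟩
  rw [hx a]
  exact hF a fun b _ => x b

/-- The index space for the independent family. -/
abbrev TT : Type := (ℕ → ℝ) × (ℕ → Option (Set ℕ))

/-- The independent family. -/
def CC (X : Set ℝ) : Set TT := {p | ∃ n, p.2 n = some (p.1 ⁻¹' X)}

theorem CC_indep (J : Set (Set ℝ)) (hJ : J.Countable) (f : J → Bool) :
    ∃ t : TT, ∀ j : J, (t ∈ CC j.1 ↔ f j = false) := by
  have : Countable J := hJ.to_subtype
  have hd : ∀ p : J × J, ∃ r : ℝ, p.1 ≠ p.2 → ¬ (r ∈ p.1.1 ↔ r ∈ p.2.1) := by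
    rintro ⟨X, Y⟩
    by_contra! h
    exact (h 0).1 (Subtype.ext (Set.ext fun r => (h r).2))
  choose d hd using hd
  obtain ⟨s, hs⟩ := ((Set.countable_range d).insert 0).exists_eq_range (Set.insert_nonempty _ _)
  have hinj : ∀ X Y : J, s ⁻¹' X.1 = s ⁻¹' Y.1 → X = Y := by
    intro X Y h
    by_contra hne
    have hm : d (X, Y) ∈ Set.range s := hs ▸ Or.inr ⟨_, rfl⟩
    obtain ⟨n, hn⟩ := hm
    apply hd (X, Y) hne
    rw [← hn]
    exact Set.ext_iff.1 h n
  have hcn : ((fun j : J => some (s ⁻¹' j.1)) '' {j | f j = false}).Countable :=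
    (Set.to_countable _).image _
  obtain ⟨F, hF⟩ := (hcn.insert none).exists_eq_range (Set.insert_nonempty _ _)
  refine ⟨(s, F), fun j => ?_⟩
  have h1 : (s, F) ∈ CC j.1 ↔ some (s ⁻¹' j.1) ∈ Set.range F := Iff.rfl
  rw [h1, ← hF]
  constructor
  · rintro (h | ⟨k, hk, h⟩)
    · cases h
    · have := hinj k j (Option.some.inj h)
      rw [← this]; exact hk
  · intro h
    exact Or.inr ⟨j, h, rfl⟩

theorem exists_surj {α β : Type} [Nonempty β] (h : Cardinal.mk β ≤ Cardinal.mk α) :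
    ∃ f : α → β, Function.Surjective f := by
  obtain ⟨e⟩ := h
  exact ⟨Function.invFun e, Function.invFun_surjective e.injective⟩

theorem mk_TT : Cardinal.mk TT ≤ Cardinal.continuum := by
  have h : Cardinal.continuum.{0} + 1 = Cardinal.continuum := by
    exact_mod_cast Cardinal.continuum_add_nat 1
  simp [TT, Cardinal.mk_real, h]

theorem mk_borel : Cardinal.mk {B : Set ℝ // MeasurableSet B} ≤ Cardinal.continuum := by
  obtain ⟨b, hb, h⟩ := MeasurableSpace.CountablyGenerated.isCountablyGenerated (α := ℝ)
  have := MeasurableSpace.cardinal_measurableSet_le_continuum (s := b)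
    ((Cardinal.mk_le_aleph0_iff.2 hb.to_subtype).trans Cardinal.aleph0_le_continuum)
  rw [← h] at this
  exact this

theorem exists_labelled (CH : (2 : Cardinal.{0}) ^ Cardinal.aleph0 = Cardinal.aleph 1) :
    ∃ (ι : Type) (x : ι → ℝ) (t : ι → TT), Function.Injective x ∧
      (∀ N : Set ℝ, volume N = 0 → (Set.range x ∩ N).Countable) ∧
      ∀ (B : Set ℝ), MeasurableSet B → 0 < volume B → ∀ s, ∃ a, x a ∈ B ∧ t a = s := by
  let ι : Type := (Cardinal.continuum.{0}).ord.ToType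
  have hι : Cardinal.mk ι = Cardinal.continuum := by simp [ι]
  have hc : ∀ a : ι, (Set.Iic a).Countable := by
    intro a
    have h1 : (Set.Iio a).Countable := by
      have := Cardinal.mk_Iio_toType_ord_lt a
      have CH' : Cardinal.continuum.{0} = Order.succ Cardinal.aleph0 := by
        rw [Cardinal.succ_aleph0, ← CH, Cardinal.two_power_aleph0]
      exact Cardinal.le_aleph0_iff_set_countable.1 (Order.lt_succ_iff.1 (this.trans_eq CH'))
    rw [← Set.Iio_insert]
    exact h1.insert a
  have : Nonempty {B : {B : Set ℝ // MeasurableSet B} // 0 < volume B.1} :=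
    ⟨⟨⟨Set.univ, MeasurableSet.univ⟩, by simp⟩⟩
  have : Nonempty {B : {B : Set ℝ // MeasurableSet B} // volume B.1 = 0} :=
    ⟨⟨⟨∅, MeasurableSet.empty⟩, by simp⟩⟩
  obtain ⟨p, hp⟩ := exists_surj (α := ι)
    (β := {B : {B : Set ℝ // MeasurableSet B} // 0 < volume B.1} × TT) (by
      rw [hι, Cardinal.mk_prod, Cardinal.lift_id, Cardinal.lift_id,
        ← Cardinal.continuum_mul_self]
      exact mul_le_mul' ((Cardinal.mk_subtype_le _).trans mk_borel) mk_TT)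
  obtain ⟨q, hq⟩ := exists_surj (α := ι)
    (β := {B : {B : Set ℝ // MeasurableSet B} // volume B.1 = 0}) (by
      rw [hι]
      exact (Cardinal.mk_subtype_le _).trans mk_borel)
  obtain ⟨x, hx⟩ := exists_choice_seq hc (fun a => (p a).1.1.1) (fun a => (q a).1.1)
    (fun a => (p a).1.2) (fun a => (q a).2)
  refine ⟨ι, x, fun a => (p a).2, ?_, ?_, ?_⟩
  · intro a b h
    rcases lt_trichotomy a b with hab | hab | hab
    · exact absurd h.symm ((hx b).2.2 a hab)
    · exact hab
    · exact absurd h ((hx a).2.2 b hab)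
  · intro N hN
    obtain ⟨b, hb⟩ := hq ⟨⟨toMeasurable volume N, measurableSet_toMeasurable _ _⟩, by
      simpa using hN⟩
    refine ((hc b).image x).mono ?_
    rintro _ ⟨⟨a, rfl⟩, haN⟩
    refine ⟨a, ?_, rfl⟩
    by_contra hab
    have := (hx a).2.1 b (not_le.1 hab).le
    rw [hb] at this
    exact this (subset_toMeasurable _ _ haN)
  · intro B hB hpos s
    obtain ⟨a, ha⟩ := hp (⟨⟨B, hB⟩, hpos⟩, s)
    refine ⟨a, ?_, ?_⟩
    · have := (hx a).1
      rwa [ha] at this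
    · simp only [ha]

theorem sierpinski_strictly_independent_family
    (CH : (2 : Cardinal) ^ Cardinal.aleph0 = Cardinal.aleph 1) :
    ∃ (I : Type) (A : I → Set ℝ), Function.Injective A ∧
      Cardinal.mk I = 2 ^ Cardinal.aleph 1 ∧
      (∀ i : I, IsSierpinski (A i) ∧ ¬MeasurableSet (A i)) ∧
      (∀ i : I, ∀ x : ℝ, IsSierpinski ((fun a => a + x) '' A i)) ∧
      (∀ J : Set I, Cardinal.mk ↥J ≤ Cardinal.aleph0 → ∀ f : J → Bool,
        (∀ B : Set ℝ, B ⊆ (⋂ j : J, cond (f j) ((A j.1)ᶜ) (A j.1))ᶜ →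
          MeasurableSet B → volume B = 0) ∧
        (∀ B : Set ℝ, MeasurableSet B → 0 < volume B →
          ((⋂ j : J, cond (f j) ((A j.1)ᶜ) (A j.1)) ∩ B).Nonempty)) := by
  have CH0 : (2 : Cardinal.{0}) ^ Cardinal.aleph0 = Cardinal.aleph 1 := by
    have h := congrArg Cardinal.lift.{0} CH
    apply Cardinal.lift_injective
    simpa using h
  obtain ⟨ι, x, t, hinj, hnull, hmeet⟩ := exists_labelled CH0
  let A : Set ℝ → Set ℝ := fun X => x '' {a | t a ∈ CC X}
  have hA : ∀ X a, x a ∈ A X ↔ t a ∈ CC X := fun X a => hinj.mem_set_image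
  -- the main combination property
  have main : ∀ (J : Set (Set ℝ)), J.Countable → ∀ (f : J → Bool) (B : Set ℝ),
      MeasurableSet B → 0 < volume B →
      ∃ y ∈ B, ∀ j : J, (y ∈ A j.1 ↔ f j = false) := by
    intro J hJ f B hB hpos
    obtain ⟨s, hs⟩ := CC_indep J hJ f
    obtain ⟨a, haB, hat⟩ := hmeet B hB hpos s
    refine ⟨x a, haB, fun j => ?_⟩
    rw [hA, hat, hs]
  have single : ∀ (X : Set ℝ) (B : Set ℝ), MeasurableSet B → 0 < volume B →
      (∃ y ∈ B, y ∈ A X) ∧ ∃ y ∈ B, y ∉ A X := by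
    intro X B hB hpos
    constructor
    · obtain ⟨y, hy, h⟩ := main {X} (Set.countable_singleton X) (fun _ => false) B hB hpos
      exact ⟨y, hy, (h ⟨X, rfl⟩).2 rfl⟩
    · obtain ⟨y, hy, h⟩ := main {X} (Set.countable_singleton X) (fun _ => true) B hB hpos
      exact ⟨y, hy, fun hh => by simpa using (h ⟨X, rfl⟩).1 hh⟩
  have hnm : ∀ X, ¬ MeasurableSet (A X) := by
    intro X hX
    have h0 : volume (A X) = 0 := by
      by_contra h
      obtain ⟨y, hy, hy'⟩ := (single X _ hX (pos_iff_ne_zero.2 h)).2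
      exact hy' hy
    have h1 : volume (A X)ᶜ = 0 := by
      by_contra h
      obtain ⟨y, hy, hy'⟩ := (single X _ hX.compl (pos_iff_ne_zero.2 h)).1
      exact hy hy'
    have h2 := measure_union_null h0 h1
    simp at h2
  have hS : ∀ X, IsSierpinski (A X) := fun X =>
    ⟨fun h => hnm X h.measurableSet, fun N hN =>
      (hnull N hN).mono (Set.inter_subset_inter_left _ (Set.image_subset_range _ _))⟩
  refine ⟨Set ℝ, A, ?_, ?_, fun X => ⟨hS X, hnm X⟩, ?_, ?_⟩
  · intro X Y h
    by_contra hne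
    classical
    obtain ⟨y, -, hy⟩ := main {X, Y} (Set.toFinite _).countable
      (fun j => decide (j.1 = Y)) Set.univ MeasurableSet.univ (by simp)
    have hX := (hy ⟨X, by simp⟩).2 (by simpa using hne)
    have hY := (hy ⟨Y, by simp⟩).1
    simp only [h] at hX
    simpa using hY hX
  · rw [Cardinal.mk_set, Cardinal.mk_real, ← CH0, Cardinal.two_power_aleph0]
  · intro X r
    have hi : Function.Injective (fun a : ℝ => a + r) := add_left_injective r
    refine ⟨fun h => (hS X).1 (Set.countable_of_injective_of_countable_image hi.injOn h), fun N hN => ?_⟩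
    have h1 : volume ((fun a : ℝ => a + r) ⁻¹' N) = 0 := by
      rw [measure_preimage_add_right]; exact hN
    refine (((hS X).2 _ h1).image (fun a => a + r)).mono ?_
    rintro _ ⟨⟨a, ha, rfl⟩, haN⟩
    exact ⟨a, ⟨ha, haN⟩, rfl⟩
  · intro J hJ f
    have h2 : ∀ B : Set ℝ, MeasurableSet B → 0 < volume B →
          ((⋂ j : J, cond (f j) ((A j.1)ᶜ) (A j.1)) ∩ B).Nonempty := by
      intro B hB hpos
      obtain ⟨y, hyB, hy⟩ := main J (Cardinal.le_aleph0_iff_set_countable.1 hJ) f B hB hpos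
      refine ⟨y, Set.mem_iInter.2 fun j => ?_, hyB⟩
      have := hy j
      cases hf : f j
      · simpa [hf] using this
      · simpa [hf] using this
    refine ⟨fun B hsub hB => ?_, h2⟩
    by_contra h
    obtain ⟨y, hy, hyB⟩ := h2 B hB (pos_iff_ne_zero.2 h)
    exact hsub hyB hy
end

section
/- Let T ⊆ ℝ be a nonmeager set such that the symmetric difference (T + x) △ T is countable for every x ∈ ℝ. Then T ∩ B ≠ ∅ for every nonmeager set B ⊆ ℝ having the Baire property. -/
theorem countable_isMeagre_aux (C : Set ℝ) (hC : C.Countable) : IsMeagre C := by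
  have : C = ⋃ c : C, {(c : ℝ)} := by ext; simp
  rw [this]
  have := hC.to_subtype
  refine isMeagre_iUnion fun c => IsNowhereDense.isMeagre ?_
  rw [IsNowhereDense, closure_singleton, interior_singleton]

theorem nonmeager_almost_invariant_meets_baire_sets
    (T : Set ℝ) (hT : ¬IsMeagre T)
    (hsym : ∀ x : ℝ, (symmDiff ((fun t => t + x) '' T) T).Countable) :
    ∀ B : Set ℝ,
      (∃ U M : Set ℝ, IsOpen U ∧ IsMeagre M ∧ B = symmDiff U M) →
      ¬IsMeagre B → (T ∩ B).Nonempty := by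
  rintro B ⟨U, M, hU, hM, rfl⟩ hB
  by_contra hne
  rw [Set.not_nonempty_iff_eq_empty] at hne
  have hUne : U.Nonempty := by
    by_contra h
    rw [Set.not_nonempty_iff_eq_empty] at h
    subst h
    exact hB (hM.mono (by intro x hx; simpa [Set.mem_symmDiff] using hx))
  apply hT
  have key : IsMeagre (⋃ q : ℚ, ((fun t : ℝ => t - (q : ℝ)) ⁻¹' M ∪
      symmDiff ((fun t => t + (q : ℝ)) '' T) T)) := by
    refine isMeagre_iUnion fun q => IsMeagre.union ?_ (countable_isMeagre_aux _ (hsym q))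
    exact hM.preimage_of_isOpenMap (by fun_prop) (Homeomorph.subRight (q : ℝ)).isOpenMap
  refine key.mono fun t ht => ?_
  obtain ⟨q, hq⟩ : ∃ q : ℚ, t - (q : ℝ) ∈ U := by
    have ho : IsOpen ((fun s : ℝ => t - s) ⁻¹' U) := hU.preimage (by fun_prop)
    obtain ⟨u, hu⟩ := hUne
    obtain ⟨q, hq⟩ := Rat.denseRange_cast (𝕜 := ℝ) |>.exists_mem_open ho
      ⟨t - u, by simpa using hu⟩
    exact ⟨q, hq⟩
  refine Set.mem_iUnion.2 ⟨q, ?_⟩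
  by_cases hm : t - (q : ℝ) ∈ M
  · exact Or.inl hm
  · right
    rw [Set.mem_symmDiff]
    refine Or.inr ⟨ht, ?_⟩
    rintro ⟨s, hs, hst⟩
    have hseq : s = t - q := by simp only at hst; linarith
    have : s ∈ T ∩ symmDiff U M := ⟨hs, by rw [hseq, Set.mem_symmDiff]; exact Or.inl ⟨hq, hm⟩⟩
    rw [hne] at this
    exact this
end

section
/- Let T ⊆ ℝ be a set that is not Lebesgue-null (i.e., T has positive Lebesgue outer measure) and such that the symmetric difference (T + x) △ T is countable for every x ∈ ℝ. Then T ∩ B ≠ ∅ for every Lebesgue measurable set B ⊆ ℝ of positive Lebesgue measure. -/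
open MeasureTheory
open scoped Pointwise

theorem nonnull_almost_invariant_meets_positive_measure_sets
    (T : Set ℝ) (hT : volume T ≠ 0)
    (hsym : ∀ x : ℝ, (symmDiff ((fun t => t + x) '' T) T).Countable) :
    ∀ B : Set ℝ, MeasurableSet B → 0 < volume B → (T ∩ B).Nonempty := by
  intro B hB hpos
  by_contra hne
  rw [Set.not_nonempty_iff_eq_empty] at hne
  let E : Set ℝ := ⋃ q : ℚ, (fun t => t + (q : ℝ)) ⁻¹' B
  have hE : MeasurableSet E :=
    MeasurableSet.iUnion fun q => (measurable_add_const (q : ℝ)) hB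
  have hTE : (T ∩ E).Countable := by
    rw [Set.inter_iUnion]
    refine Set.countable_iUnion fun q => (((hsym q).preimage (add_left_injective (q : ℝ)))).mono ?_
    rintro t ⟨ht, htB⟩
    refine Or.inl ⟨⟨t, ht, rfl⟩, fun h => ?_⟩
    have : t + (q : ℝ) ∈ T ∩ B := ⟨h, htB⟩
    rw [hne] at this
    exact this
  have hconst : Filter.EventuallyConst E (ae (volume : Measure ℝ)) := by
    have hinv : ∀ (r : ℚ) (t : ℝ), t + (r : ℝ) ∈ E → t ∈ E := by
      intro r t h
      simp only [E, Set.mem_preimage, Set.mem_iUnion] at h ⊢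
      obtain ⟨q, h⟩ := h
      refine ⟨r + q, ?_⟩
      convert h using 1
      push_cast; ring
    have hnull : ∀ x : ℝ, volume (((fun t => x + t) ⁻¹' E) \ E) = 0 := by
      intro x
      by_contra hx
      have hm : MeasurableSet (((fun t => x + t) ⁻¹' E) \ E) :=
        ((measurable_const_add x) hE).diff hE
      have hn := Measure.sub_mem_nhds_zero_of_addHaar_pos volume _ hm (pos_iff_ne_zero.2 hx)
      have hn' : ∀ᶠ y in nhds x, x - y ∈
          ((((fun t => x + t) ⁻¹' E) \ E) - (((fun t => x + t) ⁻¹' E) \ E) : Set ℝ) := by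
        have hc : Filter.Tendsto (fun y : ℝ => x - y) (nhds x) (nhds 0) := by
          have : Continuous (fun y : ℝ => x - y) := by fun_prop
          simpa using this.tendsto x
        exact hc hn
      obtain ⟨r, hr⟩ := (Rat.denseRange_cast (𝕜 := ℝ)).exists_mem_open
        isOpen_interior ⟨x, mem_interior_iff_mem_nhds.2 hn'⟩
      have hr' := interior_subset hr
      obtain ⟨a, ha, b, hb, hab⟩ := hr'
      simp only at hab
      apply ha.2
      apply hinv r
      have h1 : x + b ∈ E := hb.1
      have h2 : a + (r : ℝ) = x + b := by linarith
      rw [h2]; exact h1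
    refine aeconst_of_forall_preimage_vadd_ae_eq ℝ hE.nullMeasurableSet ?_
    intro x
    refine Filter.EventuallyLE.antisymm (ae_le_set.2 (hnull x)) (ae_le_set.2 ?_)
    have h := hnull (-x)
    rw [← measure_preimage_add volume x] at h
    convert h using 2
    ext t
    simp
  have hBE : B ⊆ E := fun t ht => Set.mem_iUnion.2 ⟨0, by simpa using ht⟩
  have hEpos : volume E ≠ 0 := (hpos.trans_le (measure_mono hBE)).ne'
  rcases Filter.eventuallyConst_set'.1 hconst with h | h
  · exact hEpos (ae_eq_empty.1 h)
  · have hc : volume Eᶜ = 0 := ae_eq_univ.1 h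
    apply hT
    refine measure_mono_null (t := (T ∩ E) ∪ Eᶜ) ?_ (measure_union_null (hTE.measure_zero _) hc)
    intro t ht
    by_cases hte : t ∈ E
    · exact Or.inl ⟨ht, hte⟩
    · exact Or.inr hte
end

section
/- Assume the continuum hypothesis (2^ℵ₀ = ℵ₁). Then there exists a nonmeager set A ⊆ ℝ such that A ∩ M is countable for every meager subset M of ℝ (so A is a Luzin set) and the symmetric difference (A + x) △ A is countable for every x ∈ ℝ. -/
open Set TopologicalSpace in
lemma aux_meagre_enum : ∃ N : ℝ → Set ℝ, (∀ x, IsMeagre (N x)) ∧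
    ∀ M : Set ℝ, IsMeagre M → ∃ x, M ⊆ N x := by
  classical
  have : Countable (countableBasis ℝ) := (countable_countableBasis ℝ).to_subtype
  let T := ℕ × countableBasis ℝ
  have hT : Cardinal.mk (Set T) ≤ Cardinal.mk ℝ := by
    rw [Cardinal.mk_set, Cardinal.mk_real, ← Cardinal.two_power_aleph0]
    exact Cardinal.power_le_power_left two_ne_zero (Cardinal.mk_le_aleph0 (α := T))
  obtain ⟨e⟩ := hT
  let f : ℝ → Set T := Function.invFun e
  have hf : Function.Surjective f := Function.invFun_surjective e.injective
  let K : Set T → Set ℝ := fun c => (⋂ n, ⋃ b : countableBasis ℝ, ⋃ _ : (n, b) ∈ c, (b : Set ℝ))ᶜ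
  refine ⟨fun x => if IsMeagre (K (f x)) then K (f x) else ∅, ?_, ?_⟩
  · intro x
    dsimp only
    split_ifs with h
    · exact h
    · exact IsMeagre.empty
  · intro M hM
    obtain ⟨t, ht, hG, hd⟩ := mem_residual.1 hM
    have hres := residual_of_dense_Gδ hG hd
    obtain ⟨u, hu, rfl⟩ := isGδ_iff_eq_iInter_nat.1 hG
    obtain ⟨x, hx⟩ := hf {p : T | (p.2 : Set ℝ) ⊆ u p.1}
    have hK : K (f x) = (⋂ n, u n)ᶜ := by
      rw [hx]
      simp only [K]
      congr 1
      refine iInter_congr fun n => ?_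
      ext y
      simp only [mem_iUnion]
      constructor
      · rintro ⟨b, hb, hy⟩
        exact hb hy
      · intro hy
        obtain ⟨b, hb, hyb, hbu⟩ := (isBasis_countableBasis ℝ).exists_subset_of_mem_open hy (hu n)
        exact ⟨⟨b, hb⟩, hbu, hyb⟩
    have hKm : IsMeagre (K (f x)) := by
      rw [hK, IsMeagre, compl_compl]; exact hres
    refine ⟨x, ?_⟩
    simp only [if_pos hKm]
    rw [hK]
    exact subset_compl_comm.1 ht

lemma aux_span_countable (S : Set ℝ) (hS : S.Countable) :
    ((Submodule.span ℤ S : Submodule ℤ ℝ) : Set ℝ).Countable := by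
  have : Countable S := hS.to_subtype
  rw [Finsupp.span_eq_range_linearCombination]
  exact Set.countable_range _

lemma aux_countable_meagre (S : Set ℝ) (hS : S.Countable) : IsMeagre S := by
  rw [← Set.biUnion_of_singleton S]
  refine isMeagre_biUnion hS fun x _ => IsNowhereDense.isMeagre ?_
  rw [IsNowhereDense, closure_singleton, interior_singleton]

open Set in
theorem exists_nonmeager_luzin_almost_translation_invariant
    (CH : (2 : Cardinal) ^ Cardinal.aleph0 = Cardinal.aleph 1) :
    ∃ A : Set ℝ, ¬IsMeagre A ∧ ¬A.Countable ∧
      (∀ M : Set ℝ, IsMeagre M → (A ∩ M).Countable) ∧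
      (∀ x : ℝ, (symmDiff ((fun a => a + x) '' A) A).Countable) := by
  obtain ⟨N, hN, hNM⟩ := aux_meagre_enum
  have CH0 : (2 : Cardinal.{0}) ^ Cardinal.aleph0.{0} = Cardinal.aleph.{0} 1 := by
    apply Cardinal.lift_injective
    rw [Cardinal.lift_power, Cardinal.lift_aleph0, Cardinal.lift_aleph, Ordinal.lift_one,
      Cardinal.lift_ofNat]
    exact CH
  obtain ⟨r, hr, hro⟩ := Cardinal.ord_eq ℝ
  have hlt : ∀ x, {y | r y x}.Countable := by
    intro x
    have h := Cardinal.card_typein_lt (r := r) x hro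
    rw [Cardinal.mk_real, ← Cardinal.two_power_aleph0, CH0] at h
    rw [Cardinal.countable_iff_lt_aleph_one]
    exact h
  have hle : ∀ x, {y | ¬ r x y}.Countable := by
    intro x
    refine ((hlt x).union (countable_singleton x)).mono ?_
    intro y hy
    rcases trichotomous_of r x y with h | h | h
    · exact absurd h hy
    · exact Or.inr h.symm
    · exact Or.inl h
  let G : ℝ → Submodule ℤ ℝ := fun α => Submodule.span ℤ {y | ¬ r α y}
  have hGc : ∀ α, (G α : Set ℝ).Countable := fun α => aux_span_countable _ (hle α)
  have hmem : ∀ α x, ¬ r α x → x ∈ G α := fun α x h => Submodule.subset_span h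
  have hex : ∀ α, ∃ a : ℝ, ∀ β, ¬ r α β → ∀ g ∈ G α, g + a ∉ N β := by
    intro α
    have hm : IsMeagre (⋃ β ∈ {y | ¬ r α y}, ⋃ g ∈ (G α : Set ℝ), (fun a => g + a) ⁻¹' N β) := by
      refine isMeagre_biUnion (hle α) fun β _ => isMeagre_biUnion (hGc α) fun g _ => ?_
      exact (hN β).preimage_of_isOpenMap (Homeomorph.addLeft g).continuous
        (Homeomorph.addLeft g).isOpenMap
    obtain ⟨a, ha⟩ := (dense_of_mem_residual hm).nonempty
    refine ⟨a, fun β hβ g hg h => ha ?_⟩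
    simp only [mem_iUnion]
    exact ⟨β, hβ, g, hg, h⟩
  choose a ha using hex
  let C : ℝ → Set ℝ := fun α => (fun g => g + a α) '' (G α : Set ℝ)
  have hC : ∀ α, (C α).Countable := fun α => (hGc α).image _
  have hU : ∀ β, (⋃ α ∈ {y | r y β}, C α).Countable := fun β => (hlt β).biUnion fun α _ => hC α
  have hnm : ¬ IsMeagre (⋃ α, C α) := by
    intro h
    obtain ⟨x, hx⟩ := hNM _ h
    have h0 : (0 : ℝ) + a x ∈ ⋃ α, C α := mem_iUnion.2 ⟨x, 0, (G x).zero_mem, rfl⟩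
    exact ha x x (irrefl_of r x) 0 (G x).zero_mem (hx h0)
  refine ⟨⋃ α, C α, hnm, fun h => hnm (aux_countable_meagre _ h), ?_, ?_⟩
  · intro M hM
    obtain ⟨β, hβ⟩ := hNM M hM
    refine (hU β).mono ?_
    rintro _ ⟨hy, hyM⟩
    obtain ⟨α, g, hg, rfl⟩ := mem_iUnion.1 hy
    by_cases h : r α β
    · exact mem_biUnion (show α ∈ {y | r y β} from h) ⟨g, hg, rfl⟩
    · exact absurd (hβ hyM) (ha α β h g hg)
  · intro x
    refine (((hU x).image (fun a => a + x)).union (hU x)).mono ?_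
    rintro y (⟨⟨z, hz, rfl⟩, hn⟩ | ⟨hy, hn⟩)
    · left
      refine ⟨z, ?_, rfl⟩
      obtain ⟨α, g, hg, rfl⟩ := mem_iUnion.1 hz
      by_cases h : r α x
      · exact mem_biUnion (show α ∈ {y | r y x} from h) ⟨g, hg, rfl⟩
      · refine (hn (mem_iUnion.2 ⟨α, g + x, (G α).add_mem hg (hmem α x h), ?_⟩)).elim
        dsimp only; ring
    · right
      obtain ⟨α, g, hg, rfl⟩ := mem_iUnion.1 hy
      by_cases h : r α x
      · exact mem_biUnion (show α ∈ {y | r y x} from h) ⟨g, hg, rfl⟩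
      · refine (hn ⟨g - x + a α, mem_iUnion.2
          ⟨α, g - x, (G α).sub_mem hg (hmem α x h), rfl⟩, ?_⟩).elim
        dsimp only; ring
end

section
/- Assume the continuum hypothesis (2^ℵ₀ = ℵ₁). Then there exists a set A ⊆ ℝ of positive Lebesgue outer measure such that A ∩ N is countable for every Lebesgue-null set N ⊆ ℝ (so A is a Sierpiński set) and the symmetric difference (A + x) △ A is countable for every x ∈ ℝ. -/
open MeasureTheory

open Cardinal in
theorem real_order_aux (h : #ℝ = aleph 1) :
    ∃ (J : Type) (_ : LinearOrder J), #J = #ℝ ∧ ∀ a : J, (Set.Iic a).Countable := by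
  refine ⟨(aleph 1).ord.ToType, inferInstance, by simp [h], fun a => ?_⟩
  have h1 : (Set.Iio a).Countable := by
    rw [countable_iff_lt_aleph_one]
    have := mk_Iio_lt a (by simp)
    simpa using this
  rw [← Set.Iio_insert]
  exact h1.insert a

open Cardinal in
theorem null_enum_aux (J : Type) (hJ : #J = #ℝ) :
    ∃ f : J → Set ℝ, (∀ j, volume (f j) = 0) ∧
      ∀ N : Set ℝ, volume N = 0 → ∃ j, N ⊆ f j := by
  have hc : #{t : Set ℝ | MeasurableSet t} ≤ continuum := by
    obtain ⟨b, hb, e⟩ := MeasurableSpace.CountablyGenerated.isCountablyGenerated (α := ℝ)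
    have := MeasurableSpace.cardinal_measurableSet_le_continuum (s := b)
      (hb.le_aleph0.trans aleph0_le_continuum)
    rw [← e] at this
    exact this
  have hle : #{t : Set ℝ | MeasurableSet t ∧ volume t = 0} ≤ #J := by
    rw [hJ, mk_real]
    exact (mk_le_mk_of_subset (fun t ht => ht.1)).trans hc
  have hne : Nonempty {t : Set ℝ | MeasurableSet t ∧ volume t = 0} :=
    ⟨⟨∅, MeasurableSet.empty, measure_empty⟩⟩
  obtain ⟨i⟩ := hle
  refine ⟨fun j => (Function.invFun i j).1, fun j => (Function.invFun i j).2.2, fun N hN => ?_⟩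
  obtain ⟨t, h1, h2, h3⟩ := exists_measurable_superset_of_null hN
  refine ⟨i ⟨t, h2, h3⟩, ?_⟩
  simp only [Function.leftInverse_invFun i.injective _]
  exact h1

theorem countable_span_aux (s : Set ℝ) (hs : s.Countable) :
    (Submodule.span ℤ s : Set ℝ).Countable := by
  have := hs.to_subtype
  rw [Finsupp.span_eq_range_linearCombination]
  exact Set.countable_range (Finsupp.linearCombination ℤ ((↑) : s → ℝ))

theorem exists_nonnull_sierpinski_almost_translation_invariant
    (CH : (2 : Cardinal) ^ Cardinal.aleph0 = Cardinal.aleph 1) :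
    ∃ A : Set ℝ, 0 < volume A ∧ ¬A.Countable ∧
      (∀ N : Set ℝ, volume N = 0 → (A ∩ N).Countable) ∧
      (∀ x : ℝ, (symmDiff ((fun a => a + x) '' A) A).Countable) := by
  have hR : Cardinal.mk ℝ = Cardinal.aleph 1 := by
    rw [Cardinal.mk_real]
    have := congrArg Cardinal.lift.{0} CH
    rw [Cardinal.two_power_aleph0] at CH
    apply Cardinal.lift_injective
    rw [Cardinal.lift_continuum, CH]
    simp
  obtain ⟨J, _, hJ, hI⟩ := real_order_aux hR
  obtain ⟨f, hf0, hf⟩ := null_enum_aux J hJ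
  obtain ⟨e⟩ := Cardinal.eq.1 hJ
  let G : J → Submodule ℤ ℝ := fun j => Submodule.span ℤ (e '' Set.Iic j)
  have hG : ∀ j, (G j : Set ℝ).Countable := fun j => countable_span_aux _ ((hI j).image _)
  have hex : ∀ j, ∃ a : ℝ, ∀ i ≤ j, ∀ g ∈ G j, a + g ∉ f i := by
    intro j
    have h0 : volume (⋃ i ∈ Set.Iic j, ⋃ g ∈ (G j : Set ℝ), (fun a => a + g) ⁻¹' f i) = 0 := by
      rw [measure_biUnion_null_iff (hI j)]
      intro i _
      rw [measure_biUnion_null_iff (hG j)]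
      intro g _
      rw [measure_preimage_add_right]
      exact hf0 i
    by_contra! hcon
    have huniv : (⋃ i ∈ Set.Iic j, ⋃ g ∈ (G j : Set ℝ), (fun a => a + g) ⁻¹' f i)
        = Set.univ := by
      refine Set.eq_univ_of_forall fun a => ?_
      obtain ⟨i, hi, g, hg, h⟩ := hcon a
      simp only [Set.mem_iUnion]
      exact ⟨i, hi, g, hg, h⟩
    rw [huniv] at h0
    simp at h0
  choose a ha using hex
  let A : Set ℝ := {y | ∃ j, ∃ g ∈ G j, y = a j + g}
  -- the part of A indexed below j is countable
  have hB : ∀ j, {y : ℝ | ∃ i ≤ j, ∃ g ∈ G i, y = a i + g}.Countable := by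
    intro j
    have : {y : ℝ | ∃ i ≤ j, ∃ g ∈ G i, y = a i + g}
        = ⋃ i ∈ Set.Iic j, (fun g => a i + g) '' (G i : Set ℝ) := by
      ext y
      simp only [Set.mem_setOf_eq, Set.mem_iUnion, Set.mem_image, Set.mem_Iic, SetLike.mem_coe,
        exists_prop, eq_comm]
    rw [this]
    exact (hI j).biUnion fun i _ => (hG i).image _
  have hN : ∀ N : Set ℝ, volume N = 0 → (A ∩ N).Countable := by
    intro N hN
    obtain ⟨j, hj⟩ := hf N hN
    refine (hB j).mono ?_
    rintro y ⟨⟨i, g, hg, rfl⟩, hy⟩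
    refine ⟨i, ?_, g, hg, rfl⟩
    by_contra! hlt
    exact ha i j hlt.le g hg (hj hy)
  have hA0 : volume A ≠ 0 := by
    intro h
    obtain ⟨j, hj⟩ := hf A h
    exact ha j j le_rfl 0 (G j).zero_mem (hj ⟨j, 0, (G j).zero_mem, rfl⟩)
  refine ⟨A, pos_iff_ne_zero.2 hA0, fun h => hA0 (h.measure_zero _), hN, fun x => ?_⟩
  have hx : ∀ i, e.symm x ≤ i → x ∈ G i := fun i hi =>
    Submodule.subset_span ⟨e.symm x, hi, by simp⟩
  refine (((hB (e.symm x)).image (fun a => a + x)).union (hB (e.symm x))).mono ?_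
  rintro y (⟨⟨_, ⟨i, g, hg, rfl⟩, rfl⟩, hy⟩ | ⟨⟨i, g, hg, rfl⟩, hy⟩)
  · left
    refine ⟨_, ⟨i, ?_, g, hg, rfl⟩, rfl⟩
    by_contra! hlt
    exact hy ⟨i, g + x, (G i).add_mem hg (hx i hlt.le), by simp [add_assoc]⟩
  · right
    refine ⟨i, ?_, g, hg, rfl⟩
    by_contra! hlt
    exact hy ⟨a i + (g - x), ⟨i, g - x, (G i).sub_mem hg (hx i hlt.le), rfl⟩, by
      show a i + (g - x) + x = a i + g
      ring⟩
end
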